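/- Let n ≥ 2, q = exp(2πi/n), and ℏ ∈ ℂ, and let ⋆ be the product on functions ℤ/nℤ → ℂ[z,w] defined by (F ⋆ G)(m) = Σ_{j=0}^{n−1} Σ_{k+l+j ≡ m} ((iℏ/2)^j/[j]_q!) · D_z^j(F(k)) · σ^j( D_w^j( γ^k(G(l)) ) ). Then F is in the center of this algebra (F ⋆ G = G ⋆ F for all G) if and only if γ(F(0)) = F(0) and, for every 1 ≤ j ≤ n−1, [j]_q! · (1−q⁻¹)^j · w^j · F(j) = (iℏ/2)^j · D_z^j(F(0)). In particular, a central element is completely determined by its γ-invariant component F(0). -/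

import Mathlib

noncomputable section

/-- The `q`-integer `[k]_q = 1 + q + ⋯ + q^(k-1)`. -/
def qint (q : ℂ) (k : ℕ) : ℂ := ∑ i ∈ Finset.range k, q ^ i

/-- The `q`-factorial `[k]_q! = ∏_{i=1}^k [i]_q`. -/
def qfact (q : ℂ) (k : ℕ) : ℂ := ∏ i ∈ Finset.range k, qint q (i + 1)

/-- The polynomial algebra `A = ℂ[z,w]`, realized as `ℂ[w][z]` (outer variable `z`,
inner variable `w`). -/
abbrev PolyZW : Type := Polynomial (Polynomial ℂ)

/-- The algebra automorphism `σ` of `ℂ[z,w]`: `z ↦ q z`, `w ↦ w`. -/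
def sigmaOp (q : ℂ) (f : PolyZW) : PolyZW :=
  f.comp (Polynomial.C (Polynomial.C q) * Polynomial.X)

/-- The algebra automorphism `τ` of `ℂ[z,w]`: `z ↦ z`, `w ↦ q⁻¹ w`
(applied to each `z`-coefficient). -/
def tauOp (q : ℂ) (f : PolyZW) : PolyZW :=
  f.sum fun n p => Polynomial.C (p.comp (Polynomial.C q⁻¹ * Polynomial.X)) * Polynomial.X ^ n

/-- The automorphism `γ = σ ∘ τ` of `ℂ[z,w]`: `z ↦ q z`, `w ↦ q⁻¹ w`. -/
def gammaOp (q : ℂ) (f : PolyZW) : PolyZW := sigmaOp q (tauOp q f)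

/-- The twisted difference operator `D_z f = (f - σ f)/((1-q) z)`; the division by `z` is
exact since `f - σ f` is divisible by `z`. -/
def Dz (q : ℂ) (f : PolyZW) : PolyZW :=
  Polynomial.C (Polynomial.C (1 - q)⁻¹) * (f - sigmaOp q f).divX

/-- The twisted difference operator `D_w f = (f - τ f)/((1-q⁻¹) w)`; the division by `w` is
exact and performed on each `z`-coefficient. -/
def Dw (q : ℂ) (f : PolyZW) : PolyZW :=
  (f - tauOp q f).sum fun n p =>
    Polynomial.C (Polynomial.C (1 - q⁻¹)⁻¹ * p.divX) * Polynomial.X ^ n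

/-- The star product on functions `ℤ/nℤ → ℂ[z,w]` (the underlying space of the complexified
crossed product `S(ℝ²)⋊ℤ_n`):
`(F ⋆ G)(m) = ∑_{j=0}^{n-1} ∑_{k+l+j ≡ m} ((iℏ/2)^j/[j]_q!) D_z^j(F(k)) σ^j(D_w^j(γ^k(G(l))))`. -/
def qstar (n : ℕ) (hbar q : ℂ) (F G : ZMod n → PolyZW) : ZMod n → PolyZW :=
  fun m =>
    ∑ j ∈ Finset.range n, ∑ k ∈ Finset.range n,
      ((Complex.I * hbar / 2) ^ j / qfact q j) •
        ((Dz q)^[j] (F (k : ZMod n)) *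
          (sigmaOp q)^[j] ((Dw q)^[j] ((gammaOp q)^[k]
            (G ((m : ZMod n) - (k : ZMod n) - (j : ZMod n))))))

/-!
Put `t = iℏ/2`. The conditions on `F` say exactly that `F(0)` is `γ`-invariant and that
`t D_z F(m) = [m+1]_q (1 - q⁻¹) w F(m+1)` for all `m`; the recurrence closes up cyclically because
`[n]_q! = 0` and `D_z^n = 0`. Commuting with the group generator `γ` gives the invariance, and
commuting with `w` gives the recurrence.

Conversely, the invariance spreads from `F(0)` to every `F(m)` along the recurrence, and since
`(1 - q⁻¹) w σ D_w = σ - γ` and `(q - 1) z D_z = σ - 1` agree on `γ`-invariant elements, `F` also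
satisfies the mirror recurrence `t σ D_w F(m) = [m+1]_q (q - 1) z F(m+1)`. The recurrences turn the
difference operators applied to `F` in `F ⋆ G` and `G ⋆ F` into multiplications by `w` and `z`, with
`q`-binomial weights that vanish for `j + k ≥ n`. The `q`-binomial theorem
`∑_j [N choose j]_q (∏_{i<j} (x - q^i y)) y^(N-j) = x^N`, for `(x, y) = (σ, γ)` and `(σ, 1)`, then
turns both products into `∑_{N<n} F(N) σ^N(G(m-N))`.
-/

namespace QStar

open Finset

section QNumbers

theorem one_sub_mul_qint (q : ℂ) (k : ℕ) : (1 - q) * qint q k = 1 - q ^ k :=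
  mul_neg_geom_sum q k

theorem qint_add (q : ℂ) (j k : ℕ) : qint q (j + k) = qint q j + q ^ j * qint q k := by
  simp only [qint, sum_range_add, pow_add, mul_sum]

theorem qint_succ_mul_one_sub_inv {q : ℂ} (hq : q ≠ 0) (m : ℕ) :
    qint q (m + 1) * (1 - q⁻¹) = q ^ m * (1 - q⁻¹ ^ (m + 1)) := by
  have hgeom := one_sub_mul_qint q (m + 1)
  calc qint q (m + 1) * (1 - q⁻¹) = -q⁻¹ * ((1 - q) * qint q (m + 1)) := by field_simp; ring
    _ = q ^ m * (1 - q⁻¹ ^ (m + 1)) := by rw [hgeom, inv_pow]; field_simp; ring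

theorem qfact_zero (q : ℂ) : qfact q 0 = 1 := prod_range_zero _

theorem qfact_succ (q : ℂ) (k : ℕ) : qfact q (k + 1) = qfact q k * qint q (k + 1) :=
  prod_range_succ _ k

theorem qfact_one (q : ℂ) : qfact q 1 = 1 := by simp [qfact, qint]

variable {n : ℕ} {q : ℂ}

theorem qint_mod_add_one (hqn : q ^ n = 1) (hq1 : q ≠ 1) (m : ℕ) :
    qint q (m % n + 1) = qint q (m + 1) := by
  apply mul_left_cancel₀ (sub_ne_zero.mpr hq1.symm)
  rw [one_sub_mul_qint, one_sub_mul_qint, pow_succ, pow_succ, ← pow_eq_pow_mod m hqn]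

theorem qint_succ_ne_zero (hq : IsPrimitiveRoot q n) {m : ℕ} (hm : m + 1 < n) :
    qint q (m + 1) ≠ 0 := fun hzero => by
  have hpow : 1 - q ^ (m + 1) = 0 := by rw [← one_sub_mul_qint, hzero, mul_zero]
  exact hq.pow_ne_one_of_pos_of_lt m.succ_ne_zero hm (sub_eq_zero.mp hpow).symm

theorem qfact_ne_zero (hq : IsPrimitiveRoot q n) {j : ℕ} (hj : j < n) : qfact q j ≠ 0 :=
  prod_ne_zero_iff.mpr fun i hi => qint_succ_ne_zero hq (by have := mem_range.mp hi; lia)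

theorem qfact_eq_zero (hq : IsPrimitiveRoot q n) (hn : 1 < n) {N : ℕ} (hN : n ≤ N) :
    qfact q N = 0 := by
  refine prod_eq_zero (mem_range.mpr (by lia : n - 1 < N)) ?_
  rw [Nat.sub_add_cancel hn.le]
  exact hq.geom_sum_eq_zero hn

end QNumbers

section QBinomial

variable {R : Type*} [CommRing R]

/-- The Gaussian binomial coefficient, defined by the `q`-Pascal rule so that it makes sense
even where the `q`-factorials vanish. -/
def qChoose (q : R) : ℕ → ℕ → R
  | _, 0 => 1
  | 0, _ + 1 => 0
  | N + 1, k + 1 => qChoose q N k + q ^ (k + 1) * qChoose q N (k + 1)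

theorem qChoose_zero_right (q : R) (N : ℕ) : qChoose q N 0 = 1 := by cases N <;> rfl

theorem qChoose_succ_succ (q : R) (N k : ℕ) :
    qChoose q (N + 1) (k + 1) = qChoose q N k + q ^ (k + 1) * qChoose q N (k + 1) := rfl

theorem qChoose_eq_zero_of_lt (q : R) {N k : ℕ} (h : N < k) : qChoose q N k = 0 := by
  induction N generalizing k with
  | zero => obtain ⟨k, rfl⟩ := Nat.exists_eq_succ_of_ne_zero h.ne'; rfl
  | succ N ih =>
    obtain ⟨k, rfl⟩ := Nat.exists_eq_succ_of_ne_zero (Nat.ne_zero_of_lt h)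
    rw [qChoose_succ_succ, ih (by lia), ih (by lia), mul_zero, add_zero]

theorem qChoose_self (q : R) (N : ℕ) : qChoose q N N = 1 := by
  induction N with
  | zero => rfl
  | succ N ih => rw [qChoose_succ_succ, ih, qChoose_eq_zero_of_lt q N.lt_succ_self, mul_zero,
      add_zero]

theorem qChoose_mul_qfact_mul_qfact (q : ℂ) (j k : ℕ) :
    qChoose q (j + k) j * (qfact q j * qfact q k) = qfact q (j + k) := by
  induction j generalizing k with
  | zero => rw [qChoose_zero_right, qfact_zero, zero_add, one_mul, one_mul]
  | succ j ihj =>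
    induction k with
    | zero => rw [add_zero, qChoose_self, qfact_zero, one_mul, mul_one]
    | succ k ihk =>
      have hleft := ihj (k + 1)
      rw [show j + (k + 1) = j + 1 + k by ring] at hleft
      rw [← add_assoc, qChoose_succ_succ, qfact_succ q (j + 1 + k), add_assoc (j + 1), qint_add]
      rw [qfact_succ q j] at ihk ⊢
      rw [qfact_succ q k] at hleft ⊢
      linear_combination qint q (j + 1) * hleft + q ^ (j + 1) * qint q (k + 1) * ihk

theorem qChoose_eq_zero {n : ℕ} {q : ℂ} (hq : IsPrimitiveRoot q n) (hn : 1 < n) {j k : ℕ}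
    (hj : j < n) (hk : k < n) (hjk : n ≤ j + k) : qChoose q (j + k) j = 0 := by
  have h := qChoose_mul_qfact_mul_qfact q j k
  rw [qfact_eq_zero hq hn hjk] at h
  exact (mul_eq_zero.mp h).resolve_right (mul_ne_zero (qfact_ne_zero hq hj) (qfact_ne_zero hq hk))

theorem sum_range_sum_range_qChoose_smul {V : Type*} [AddCommGroup V] [Module ℂ V] {n : ℕ}
    {q : ℂ} (hq : IsPrimitiveRoot q n) (hn : 1 < n) (f : ℕ → ℕ → V) :
    ∑ j ∈ range n, ∑ k ∈ range n, qChoose q (j + k) j • f j k =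
      ∑ N ∈ range n, ∑ p ∈ antidiagonal N, qChoose q N p.1 • f p.1 p.2 := by
  have hdiag (N : ℕ) : ∑ p ∈ antidiagonal N, qChoose q N p.1 • f p.1 p.2 =
      ∑ p ∈ antidiagonal N, qChoose q (p.1 + p.2) p.1 • f p.1 p.2 :=
    sum_congr rfl fun p hp => by rw [mem_antidiagonal.mp hp]
  simp only [hdiag, Nat.sum_antidiagonal_eq_sum_range_succ_mk]
  rw [sum_range_diag_flip n fun j k => qChoose q (j + k) j • f j k]
  refine sum_congr rfl fun j hj => (sum_subset (range_mono (by lia)) fun k hk hk' => ?_).symm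
  simp only [mem_range] at hj hk hk'
  rw [qChoose_eq_zero hq hn hj hk (by lia), zero_smul]

variable {A : Type*} [Ring A] [Algebra R A]

/-- The homogeneous `q`-Pochhammer product `(x - q^(j-1) y) ⋯ (x - q y) (x - y)`. The factors are
ordered because `x` and `y` need not commute. -/
def qPochhammer (q : R) (x y : A) : ℕ → A
  | 0 => 1
  | j + 1 => (x - q ^ j • y) * qPochhammer q x y j

theorem qPochhammer_succ (q : R) (x y : A) (j : ℕ) :
    qPochhammer q x y (j + 1) = (x - q ^ j • y) * qPochhammer q x y j := rfl

theorem commute_qPochhammer (q : R) {x y : A} (h : Commute x y) (j : ℕ) :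
    Commute y (qPochhammer q x y j) := by
  induction j with
  | zero => exact Commute.one_right y
  | succ j ih => exact (h.symm.sub_right ((Commute.refl y).smul_right _)).mul_right ih

theorem sum_antidiagonal_qChoose_smul_qPochhammer_mul_pow (q : R) {x y : A} (h : Commute x y)
    (N : ℕ) :
    ∑ p ∈ antidiagonal N, qChoose q N p.1 • (qPochhammer q x y p.1 * y ^ p.2) = x ^ N := by
  induction N with
  | zero => simp [qChoose_zero_right, qPochhammer]
  | succ N ih =>
    have hstep (j k : ℕ) : x * (qPochhammer q x y j * y ^ k) =
        qPochhammer q x y (j + 1) * y ^ k + q ^ j • (qPochhammer q x y j * y ^ (k + 1)) := by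
      rw [qPochhammer_succ, pow_succ', ← mul_assoc _ y, ← (commute_qPochhammer q h j).eq]
      simp only [sub_mul, smul_mul_assoc, mul_assoc, sub_add_cancel]
    have hlast : ∑ p ∈ antidiagonal N,
          (q ^ p.1 * qChoose q N p.1) • (qPochhammer q x y p.1 * y ^ (p.2 + 1)) =
        y ^ (N + 1) + ∑ p ∈ antidiagonal N,
          (q ^ (p.1 + 1) * qChoose q N (p.1 + 1)) • (qPochhammer q x y (p.1 + 1) * y ^ p.2) := by
      have := Nat.sum_antidiagonal_succ' (n := N) (f := fun p =>
        (q ^ p.1 * qChoose q N p.1) • (qPochhammer q x y p.1 * y ^ p.2))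
      rw [Nat.sum_antidiagonal_succ] at this
      simpa [qChoose_eq_zero_of_lt q N.lt_succ_self, qChoose_zero_right, qPochhammer]
        using this.symm
    calc ∑ p ∈ antidiagonal (N + 1),
          qChoose q (N + 1) p.1 • (qPochhammer q x y p.1 * y ^ p.2)
      _ = ∑ p ∈ antidiagonal N, qChoose q N p.1 • (x * (qPochhammer q x y p.1 * y ^ p.2)) := by
        simp only [Nat.sum_antidiagonal_succ, qChoose_zero_right, qChoose_succ_succ, hstep,
          add_smul, smul_add, smul_smul, sum_add_distrib, mul_comm (qChoose q N _), hlast]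
        simp only [qPochhammer, one_smul, one_mul]
        abel
      _ = x ^ (N + 1) := by simp only [pow_succ' x, ← ih, mul_sum, mul_smul_comm]

theorem smul_pow_mul_pow_eq_qPochhammer {q c u : R} {x y M D : A} (hMD : c • (M * D) = x - y)
    (hx : SemiconjBy x M (u • M)) (hy : SemiconjBy y (q • M) (u • M)) (j : ℕ) :
    (u ^ j.choose 2 * c ^ j) • (M ^ j * D ^ j) = qPochhammer q x y j := by
  induction j with
  | zero => simp [qPochhammer]
  | succ j ih =>
    have hshift : (x - q ^ j • y) * M ^ j = u ^ j • (M ^ j * (x - y)) := by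
      have hxj := (hx.pow_right j).eq
      have hyj := (hy.pow_right j).eq
      simp only [smul_pow, smul_mul_assoc, mul_smul_comm] at hxj hyj
      rw [sub_mul, smul_mul_assoc, hxj, hyj, mul_sub, smul_sub]
    calc (u ^ (j + 1).choose 2 * c ^ (j + 1)) • (M ^ (j + 1) * D ^ (j + 1))
      _ = (u ^ j.choose 2 * c ^ j) • (u ^ j • (M ^ j * (c • (M * D)))) * D ^ j := by
        rw [Nat.choose_succ_succ' j 1, Nat.choose_one_right, pow_succ M, pow_succ' D]
        simp only [mul_smul_comm, smul_mul_assoc, smul_smul, mul_assoc]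
        congr 1
        ring
      _ = (x - q ^ j • y) * ((u ^ j.choose 2 * c ^ j) • (M ^ j * D ^ j)) := by
        rw [hMD, ← hshift]
        simp only [mul_smul_comm, smul_mul_assoc, mul_assoc]
      _ = qPochhammer q x y (j + 1) := by rw [ih, qPochhammer_succ]

end QBinomial

section Recurrence

variable {V : Type*} [AddCommGroup V] [Module ℂ V] {q t r d : ℂ} {D M : Module.End ℂ V} {u : ℕ → V}

theorem qfact_mul_pow_smul_pow_apply (hDM : SemiconjBy D M (r • M))
    (hu : ∀ m, t • D (u m) = (qint q (m + 1) * d) • M (u (m + 1))) (j k : ℕ) :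
    (qfact q k * t ^ j) • (D ^ j) (u k) =
      (qfact q (j + k) * (r ^ j.choose 2 * d ^ j)) • (M ^ j) (u (j + k)) := by
  induction j with
  | zero => simp
  | succ j ih =>
    have hcomm (v : V) : D ((M ^ j) v) = r ^ j • (M ^ j) (D v) := by
      have := LinearMap.congr_fun (hDM.pow_right j).eq v
      simpa only [smul_pow, smul_mul_assoc, LinearMap.smul_apply, Module.End.mul_apply] using this
    calc (qfact q k * t ^ (j + 1)) • (D ^ (j + 1)) (u k)
      _ = t • D ((qfact q k * t ^ j) • (D ^ j) (u k)) := by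
        rw [pow_succ' D, Module.End.mul_apply, map_smul, smul_smul]
        congr 1
        ring
      _ = (qfact q (j + k) * (r ^ j.choose 2 * d ^ j) * r ^ j) •
            (M ^ j) (t • D (u (j + k))) := by
        rw [ih, map_smul, hcomm, map_smul, smul_comm t, smul_comm t, smul_smul]
      _ = (qfact q (j + 1 + k) * (r ^ (j + 1).choose 2 * d ^ (j + 1))) •
            (M ^ (j + 1)) (u (j + 1 + k)) := by
        rw [hu, map_smul, smul_smul, add_right_comm j 1 k, pow_succ M, Module.End.mul_apply,
          qfact_succ, Nat.choose_succ_succ' j 1, Nat.choose_one_right]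
        congr 1
        ring

theorem pow_div_qfact_smul_pow_apply (hDM : SemiconjBy D M (r • M))
    (hu : ∀ m, t • D (u m) = (qint q (m + 1) * d) • M (u (m + 1))) {j k : ℕ}
    (hj : qfact q j ≠ 0) (hk : qfact q k ≠ 0) :
    (t ^ j / qfact q j) • (D ^ j) (u k) =
      qChoose q (j + k) j • (r ^ j.choose 2 * d ^ j) • (M ^ j) (u (j + k)) := by
  apply smul_right_injective V (mul_ne_zero hj hk)
  have h := qfact_mul_pow_smul_pow_apply hDM hu j k
  rw [← qChoose_mul_qfact_mul_qfact] at h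
  simp only [smul_smul]
  convert h using 2
  · field_simp
  · ring

theorem sum_pow_div_qfact_smul_pow_apply_mul {A : Type*} [CommRing A] [Algebra ℂ A] {a : A}
    {D D' x y : Module.End ℂ A} {u : ℕ → A} {n : ℕ} (hq : IsPrimitiveRoot q n) (hn : 1 < n)
    (hD : SemiconjBy D (LinearMap.mulLeft ℂ a) (r • LinearMap.mulLeft ℂ a))
    (hu : ∀ m, t • D (u m) = (qint q (m + 1) * d) • (a * u (m + 1)))
    (hD' : d • (LinearMap.mulLeft ℂ a * D') = x - y)
    (hx : SemiconjBy x (LinearMap.mulLeft ℂ a) (r • LinearMap.mulLeft ℂ a))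
    (hy : SemiconjBy y (q • LinearMap.mulLeft ℂ a) (r • LinearMap.mulLeft ℂ a))
    (hxy : Commute x y) (g : ℕ → A) :
    ∑ j ∈ range n, ∑ k ∈ range n,
        (t ^ j / qfact q j) • ((D ^ j) (u k) * (D' ^ j) ((y ^ k) (g (j + k)))) =
      ∑ N ∈ range n, u N * (x ^ N) (g N) := by
  have hterm {j k : ℕ} (hj : j < n) (hk : k < n) :
      (t ^ j / qfact q j) • ((D ^ j) (u k) * (D' ^ j) ((y ^ k) (g (j + k)))) =
        qChoose q (j + k) j •
          (u (j + k) * (qPochhammer q x y j * y ^ k) (g (j + k))) := by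
    rw [← smul_mul_assoc,
      pow_div_qfact_smul_pow_apply hD hu (qfact_ne_zero hq hj) (qfact_ne_zero hq hk),
      ← smul_pow_mul_pow_eq_qPochhammer hD' hx hy]
    simp only [LinearMap.pow_mulLeft, LinearMap.mulLeft_apply, Module.End.mul_apply,
      LinearMap.smul_apply, smul_mul_assoc, mul_smul_comm, mul_assoc, mul_left_comm]
  calc _ = ∑ j ∈ range n, ∑ k ∈ range n, qChoose q (j + k) j •
          (u (j + k) * (qPochhammer q x y j * y ^ k) (g (j + k))) :=
        sum_congr rfl fun j hj => sum_congr rfl fun k hk =>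
          hterm (mem_range.mp hj) (mem_range.mp hk)
    _ = ∑ N ∈ range n, ∑ p ∈ antidiagonal N, qChoose q N p.1 •
          (u N * (qPochhammer q x y p.1 * y ^ p.2) (g N)) := by
        rw [sum_range_sum_range_qChoose_smul hq hn fun j k =>
          u (j + k) * (qPochhammer q x y j * y ^ k) (g (j + k))]
        exact sum_congr rfl fun N _ => sum_congr rfl fun p hp => by rw [mem_antidiagonal.mp hp]
    _ = ∑ N ∈ range n, u N * (x ^ N) (g N) := by
        refine sum_congr rfl fun N _ => ?_
        rw [← sum_antidiagonal_qChoose_smul_qPochhammer_mul_pow q hxy]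
        simp only [LinearMap.sum_apply, LinearMap.smul_apply, mul_sum, mul_smul_comm]

end Recurrence

section Operators

open Polynomial

theorem ext_coeff_coeff {f g : PolyZW} (h : ∀ a b, (f.coeff a).coeff b = (g.coeff a).coeff b) :
    f = g :=
  Polynomial.ext fun a => Polynomial.ext (h a)

theorem coeff_sum_C_mul_X_pow {R : Type*} [Semiring R] (f : R[X]) {φ : R → R} (hφ : φ 0 = 0)
    (a : ℕ) : (f.sum fun n p => C (φ p) * X ^ n).coeff a = φ (f.coeff a) := by
  simp only [sum_def, finsetSum_coeff, coeff_C_mul, coeff_X_pow, mul_ite, mul_one, mul_zero,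
    Finset.sum_ite_eq]
  split_ifs with ha
  · rfl
  · rw [notMem_support_iff.mp ha, hφ]

variable (q : ℂ) (f : PolyZW) (a b : ℕ)

theorem coeff_coeff_sigmaOp : ((sigmaOp q f).coeff a).coeff b = q ^ a * (f.coeff a).coeff b := by
  rw [sigmaOp, comp_C_mul_X_coeff, ← C_pow, coeff_mul_C, mul_comm]

theorem coeff_coeff_tauOp : ((tauOp q f).coeff a).coeff b = q⁻¹ ^ b * (f.coeff a).coeff b := by
  rw [tauOp, coeff_sum_C_mul_X_pow f (φ := fun p => p.comp (C q⁻¹ * X)) zero_comp,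
    comp_C_mul_X_coeff, mul_comm]

theorem coeff_coeff_Dz : ((Dz q f).coeff a).coeff b =
    (1 - q)⁻¹ * (1 - q ^ (a + 1)) * (f.coeff (a + 1)).coeff b := by
  rw [Dz, coeff_C_mul, coeff_C_mul, coeff_divX, coeff_sub, coeff_sub, coeff_coeff_sigmaOp]
  ring

theorem coeff_coeff_Dw : ((Dw q f).coeff a).coeff b =
    (1 - q⁻¹)⁻¹ * (1 - q⁻¹ ^ (b + 1)) * (f.coeff a).coeff (b + 1) := by
  rw [Dw, coeff_sum_C_mul_X_pow _ (φ := fun p => C (1 - q⁻¹)⁻¹ * p.divX) (by simp), coeff_C_mul,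
    coeff_divX, coeff_sub, coeff_sub, coeff_coeff_tauOp]
  ring

theorem coeff_coeff_smul (c : ℂ) : ((c • f).coeff a).coeff b = c * (f.coeff a).coeff b := by
  simp only [coeff_smul, smul_eq_mul]

/-- A map on `ℂ[z,w]` whose coefficients are given by multiplying and shifting those of the
argument, bundled as a linear endomorphism. -/
def endOfCoeff (T : PolyZW → PolyZW) (c : ℕ → ℕ → ℂ) (i j : ℕ)
    (hT : ∀ f a b, ((T f).coeff a).coeff b = c a b * (f.coeff (a + i)).coeff (b + j)) :
    Module.End ℂ PolyZW where
  toFun := T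
  map_add' f g := ext_coeff_coeff fun a b => by simp only [coeff_add, hT, mul_add]
  map_smul' s f := ext_coeff_coeff fun a b => by
    simp only [coeff_coeff_smul, hT, RingHom.id_apply, mul_left_comm]

/-- The automorphism `σ` as a linear endomorphism. -/
def sigmaEnd : Module.End ℂ PolyZW := endOfCoeff (sigmaOp q) _ 0 0 (coeff_coeff_sigmaOp q)

/-- The automorphism `τ` as a linear endomorphism. -/
def tauEnd : Module.End ℂ PolyZW := endOfCoeff (tauOp q) _ 0 0 (coeff_coeff_tauOp q)

/-- The automorphism `γ` as a linear endomorphism. -/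
def gammaEnd : Module.End ℂ PolyZW := sigmaEnd q * tauEnd q

/-- The difference operator `D_z` as a linear endomorphism. -/
def DzEnd : Module.End ℂ PolyZW := endOfCoeff (Dz q) _ 1 0 (coeff_coeff_Dz q)

/-- The difference operator `D_w` as a linear endomorphism. -/
def DwEnd : Module.End ℂ PolyZW := endOfCoeff (Dw q) _ 0 1 (coeff_coeff_Dw q)

/-- The operator `σ D_w`. Since `σ` and `D_w` commute, its powers are the `σ^j D_w^j` of the star
product. -/
def sigmaDwEnd : Module.End ℂ PolyZW := sigmaEnd q * DwEnd q

/-- Multiplication by `z` on `ℂ[z,w]`. -/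
def zEnd : Module.End ℂ PolyZW := LinearMap.mulLeft ℂ X

/-- Multiplication by `w` on `ℂ[z,w]`. -/
def wEnd : Module.End ℂ PolyZW := LinearMap.mulLeft ℂ (C X)

variable {f a b}

theorem end_ext {S T : Module.End ℂ PolyZW}
    (h : ∀ f a b, ((S f).coeff a).coeff b = ((T f).coeff a).coeff b) : S = T :=
  LinearMap.ext fun f => ext_coeff_coeff (h f)

theorem zEnd_apply : zEnd f = X * f := rfl

theorem wEnd_apply : wEnd f = C X * f := rfl

theorem coeff_coeff_sigmaEnd :
    ((sigmaEnd q f).coeff a).coeff b = q ^ a * (f.coeff a).coeff b :=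
  coeff_coeff_sigmaOp q f a b

theorem coeff_coeff_tauEnd :
    ((tauEnd q f).coeff a).coeff b = q⁻¹ ^ b * (f.coeff a).coeff b :=
  coeff_coeff_tauOp q f a b

theorem coeff_coeff_DzEnd : ((DzEnd q f).coeff a).coeff b =
    (1 - q)⁻¹ * (1 - q ^ (a + 1)) * (f.coeff (a + 1)).coeff b :=
  coeff_coeff_Dz q f a b

theorem coeff_coeff_DwEnd : ((DwEnd q f).coeff a).coeff b =
    (1 - q⁻¹)⁻¹ * (1 - q⁻¹ ^ (b + 1)) * (f.coeff a).coeff (b + 1) :=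
  coeff_coeff_Dw q f a b

theorem coeff_coeff_zEnd_zero : ((zEnd f).coeff 0).coeff b = 0 := by
  rw [zEnd_apply, coeff_X_mul_zero, coeff_zero]

theorem coeff_coeff_zEnd_succ : ((zEnd f).coeff (a + 1)).coeff b = (f.coeff a).coeff b := by
  rw [zEnd_apply, coeff_X_mul]

theorem coeff_coeff_wEnd_zero : ((wEnd f).coeff a).coeff 0 = 0 := by
  rw [wEnd_apply, coeff_C_mul, coeff_X_mul_zero]

theorem coeff_coeff_wEnd_succ : ((wEnd f).coeff a).coeff (b + 1) = (f.coeff a).coeff b := by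
  rw [wEnd_apply, coeff_C_mul, coeff_X_mul]

theorem wEnd_injective : Function.Injective wEnd := fun _ _ h => mul_left_cancel₀ (by simp) h

theorem wEnd_pow_apply (j : ℕ) : (wEnd ^ j) f = C X ^ j * f := by
  rw [wEnd, LinearMap.pow_mulLeft, LinearMap.mulLeft_apply]

theorem commute_sigmaEnd_tauEnd : Commute (sigmaEnd q) (tauEnd q) := end_ext fun f a b => by
  simp only [Module.End.mul_apply, coeff_coeff_sigmaEnd, coeff_coeff_tauEnd]
  ring

theorem commute_sigmaEnd_DwEnd : Commute (sigmaEnd q) (DwEnd q) := end_ext fun f a b => by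
  simp only [Module.End.mul_apply, coeff_coeff_sigmaEnd, coeff_coeff_DwEnd]
  ring

theorem commute_sigmaEnd_gammaEnd : Commute (sigmaEnd q) (gammaEnd q) :=
  (Commute.refl _).mul_right (commute_sigmaEnd_tauEnd q)

theorem sigmaDwEnd_pow (j : ℕ) : sigmaDwEnd q ^ j = sigmaEnd q ^ j * DwEnd q ^ j :=
  (commute_sigmaEnd_DwEnd q).mul_pow j

theorem commute_tauEnd_DzEnd : Commute (tauEnd q) (DzEnd q) := end_ext fun f a b => by
  simp only [Module.End.mul_apply, coeff_coeff_tauEnd, coeff_coeff_DzEnd]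
  ring

theorem commute_sigmaEnd_wEnd : Commute (sigmaEnd q) wEnd := end_ext fun f a b => by
  cases b <;> simp only [Module.End.mul_apply, coeff_coeff_sigmaEnd, coeff_coeff_wEnd_zero,
    coeff_coeff_wEnd_succ, mul_zero]

theorem commute_DzEnd_wEnd : Commute (DzEnd q) wEnd := end_ext fun f a b => by
  cases b <;> simp only [Module.End.mul_apply, coeff_coeff_DzEnd, coeff_coeff_wEnd_zero,
    coeff_coeff_wEnd_succ, mul_zero]

theorem commute_DwEnd_zEnd : Commute (DwEnd q) zEnd := end_ext fun f a b => by
  cases a <;> simp only [Module.End.mul_apply, coeff_coeff_DwEnd, coeff_coeff_zEnd_zero,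
    coeff_coeff_zEnd_succ, mul_zero]

theorem semiconjBy_sigmaEnd_zEnd : SemiconjBy (sigmaEnd q) zEnd (q • zEnd) :=
  end_ext fun f a b => by
    cases a <;> simp only [Module.End.mul_apply, LinearMap.smul_apply, coeff_coeff_smul,
      coeff_coeff_sigmaEnd, coeff_coeff_zEnd_zero, coeff_coeff_zEnd_succ] <;> ring

theorem semiconjBy_sigmaDwEnd_zEnd : SemiconjBy (sigmaDwEnd q) zEnd (q • zEnd) :=
  (semiconjBy_sigmaEnd_zEnd q).mul_left (commute_DwEnd_zEnd q)

theorem semiconjBy_tauEnd_wEnd : SemiconjBy (tauEnd q) wEnd (q⁻¹ • wEnd) :=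
  end_ext fun f a b => by
    cases b <;> simp only [Module.End.mul_apply, LinearMap.smul_apply, coeff_coeff_smul,
      coeff_coeff_tauEnd, coeff_coeff_wEnd_zero, coeff_coeff_wEnd_succ] <;> ring

theorem semiconjBy_gammaEnd_wEnd : SemiconjBy (gammaEnd q) wEnd (q⁻¹ • wEnd) :=
  SemiconjBy.mul_left ((commute_sigmaEnd_wEnd q).smul_right q⁻¹) (semiconjBy_tauEnd_wEnd q)

theorem DzEnd_C (p : ℂ[X]) : DzEnd q (C p) = 0 := by
  change C (C (1 - q)⁻¹) * (C p - (C p).comp _).divX = 0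
  rw [C_comp, sub_self, divX_zero, mul_zero]

theorem tauEnd_one : tauEnd q 1 = 1 := ext_coeff_coeff fun a b => by
  cases a <;> cases b <;> simp [coeff_coeff_tauEnd, coeff_one]

theorem sigmaDwEnd_one : sigmaDwEnd q 1 = 0 := by
  have hDw : DwEnd q 1 = 0 := ext_coeff_coeff fun a b => by
    cases a <;> simp [coeff_coeff_DwEnd, coeff_one]
  rw [sigmaDwEnd, Module.End.mul_apply, hDw, map_zero]

theorem sigmaEnd_one : sigmaEnd q 1 = 1 := one_comp

theorem gammaEnd_one : gammaEnd q 1 = 1 := by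
  rw [gammaEnd, Module.End.mul_apply, tauEnd_one, sigmaEnd_one]

theorem gammaEnd_pow_one (k : ℕ) : (gammaEnd q ^ k) 1 = 1 := by
  rw [Module.End.pow_apply, Function.iterate_fixed (gammaEnd_one q)]

theorem gammaEnd_pow_w (k : ℕ) : (gammaEnd q ^ k) (C X) = q⁻¹ ^ k • C X := by
  have hw : gammaEnd q (wEnd 1) = q⁻¹ • wEnd (gammaEnd q 1) :=
    LinearMap.congr_fun (semiconjBy_gammaEnd_wEnd q).eq 1
  rw [gammaEnd_one, wEnd_apply, mul_one] at hw
  induction k with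
  | zero => simp
  | succ k ih => rw [pow_succ, Module.End.mul_apply, hw, map_smul, ih, smul_smul, ← pow_succ']

variable {q}

theorem semiconjBy_sigmaEnd_DzEnd (hq : q ≠ 0) :
    SemiconjBy (sigmaEnd q) (DzEnd q) (q⁻¹ • DzEnd q) := end_ext fun f a b => by
  simp only [Module.End.mul_apply, LinearMap.smul_apply, coeff_coeff_smul, coeff_coeff_sigmaEnd,
    coeff_coeff_DzEnd]
  rw [pow_succ]
  field_simp

theorem semiconjBy_gammaEnd_smul_wEnd (hq : q ≠ 0) : SemiconjBy (gammaEnd q) (q • wEnd) wEnd := by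
  rw [SemiconjBy, mul_smul_comm, (semiconjBy_gammaEnd_wEnd q).eq, smul_mul_assoc,
    smul_inv_smul₀ hq]

theorem semiconjBy_gammaEnd_DzEnd (hq : q ≠ 0) :
    SemiconjBy (gammaEnd q) (DzEnd q) (q⁻¹ • DzEnd q) :=
  (semiconjBy_sigmaEnd_DzEnd hq).mul_left (commute_tauEnd_DzEnd q)

theorem sub_one_smul_zEnd_mul_DzEnd (hq : q ≠ 1) :
    (q - 1) • (zEnd * DzEnd q) = sigmaEnd q - 1 := end_ext fun f a b => by
  have : 1 - q ≠ 0 := sub_ne_zero.mpr hq.symm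
  simp only [Module.End.mul_apply, LinearMap.smul_apply, LinearMap.sub_apply, Module.End.one_apply,
    coeff_sub, coeff_coeff_smul, coeff_coeff_sigmaEnd]
  cases a with
  | zero => rw [coeff_coeff_zEnd_zero]; ring
  | succ a => rw [coeff_coeff_zEnd_succ, coeff_coeff_DzEnd]; field_simp; ring

theorem one_sub_inv_smul_wEnd_mul_DwEnd (hq : q ≠ 1) :
    (1 - q⁻¹) • (wEnd * DwEnd q) = 1 - tauEnd q := end_ext fun f a b => by
  have : 1 - q⁻¹ ≠ 0 := sub_ne_zero.mpr (inv_ne_one.mpr hq).symm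
  simp only [Module.End.mul_apply, LinearMap.smul_apply, LinearMap.sub_apply, Module.End.one_apply,
    coeff_sub, coeff_coeff_smul, coeff_coeff_tauEnd]
  cases b with
  | zero => rw [coeff_coeff_wEnd_zero]; ring
  | succ b =>
    rw [coeff_coeff_wEnd_succ, coeff_coeff_DwEnd, mul_assoc, mul_inv_cancel_left₀ this]
    ring

theorem one_sub_inv_smul_wEnd_mul_sigmaDwEnd (hq : q ≠ 1) :
    (1 - q⁻¹) • (wEnd * sigmaDwEnd q) = sigmaEnd q - gammaEnd q := by
  rw [sigmaDwEnd, ← mul_assoc, ← (commute_sigmaEnd_wEnd q).eq, mul_assoc, ← mul_smul_comm,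
    one_sub_inv_smul_wEnd_mul_DwEnd hq]
  exact mul_sub (sigmaEnd q) 1 (tauEnd q)

theorem coeff_coeff_DzEnd_pow_eq_zero {i j : ℕ} (hi : q ^ i = 1) (hai : a < i) (hij : i ≤ a + j) :
    (((DzEnd q ^ j) f).coeff a).coeff b = 0 := by
  induction j generalizing a with
  | zero => lia
  | succ j ih =>
    rw [pow_succ', Module.End.mul_apply, coeff_coeff_DzEnd]
    rcases (Nat.succ_le_of_lt hai).eq_or_lt with rfl | hlt
    · rw [hi, sub_self, mul_zero, zero_mul]
    · rw [ih hlt (by lia), mul_zero]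

theorem DzEnd_pow_eq_zero {n : ℕ} (hn : n ≠ 0) (hq : q ^ n = 1) : DzEnd q ^ n = 0 :=
  end_ext fun f a b => by
    have hmod := Nat.div_add_mod a n
    have hlt := Nat.mod_lt a (Nat.pos_of_ne_zero hn)
    have hi : q ^ (n * (a / n) + n) = 1 := by rw [pow_add, pow_mul, hq, one_pow, one_mul]
    rw [coeff_coeff_DzEnd_pow_eq_zero hi (by lia) (by lia)]
    rfl

theorem sigmaDwEnd_w (hq : q ≠ 1) : sigmaDwEnd q (C X) = 1 := by
  have hc : 1 - q⁻¹ ≠ 0 := sub_ne_zero.mpr (inv_ne_one.mpr hq).symm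
  have hdiff : (1 - q⁻¹) • wEnd (sigmaDwEnd q (C X)) = sigmaEnd q (C X) - gammaEnd q (C X) :=
    LinearMap.congr_fun (one_sub_inv_smul_wEnd_mul_sigmaDwEnd hq) (C X)
  have hsigma : sigmaEnd q (C X) = C X := C_comp
  have hgamma : gammaEnd q (C X) = q⁻¹ • C X := by simpa using gammaEnd_pow_w q 1
  have hw : C X - q⁻¹ • C X = (1 - q⁻¹) • wEnd 1 := by
    rw [sub_smul, one_smul, wEnd_apply, mul_one]
  rw [hsigma, hgamma, hw] at hdiff
  exact wEnd_injective (smul_right_injective PolyZW hc hdiff)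

end Operators

section StarProduct

open Polynomial

variable {n : ℕ} {hbar q : ℂ}

theorem qstar_apply (F G : ZMod n → PolyZW) (m : ZMod n) :
    qstar n hbar q F G m = ∑ j ∈ range n, ∑ k ∈ range n,
      ((Complex.I * hbar / 2) ^ j / qfact q j) • ((DzEnd q ^ j) (F k) *
        (sigmaDwEnd q ^ j) ((gammaEnd q ^ k) (G (m - k - j)))) := by
  simp only [sigmaDwEnd_pow, Module.End.mul_apply, Module.End.pow_apply]
  rfl

theorem sum_range_eq_sum_zmod {V : Type*} [AddCommMonoid V] [NeZero n] (f : ℕ → V) :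
    ∑ k ∈ range n, f k = ∑ x : ZMod n, f x.val :=
  (sum_nbij' ZMod.val (fun k => (k : ZMod n)) (by simp [ZMod.val_lt]) (by simp) (by simp)
    (fun k hk => ZMod.val_cast_of_lt (mem_range.mp hk)) (by simp)).symm

theorem qstar_apply_zmod [NeZero n] (F G : ZMod n → PolyZW) (m : ZMod n) :
    qstar n hbar q F G m = ∑ j ∈ range n, ∑ x : ZMod n,
      ((Complex.I * hbar / 2) ^ j / qfact q j) • ((DzEnd q ^ j) (F x) *
        (sigmaDwEnd q ^ j) ((gammaEnd q ^ x.val) (G (m - x - j)))) := by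
  simp only [qstar_apply, sum_range_eq_sum_zmod (n := n) fun _ => _ • _, ZMod.natCast_val,
    ZMod.cast_id', id]

theorem qstar_apply_flip [NeZero n] (F G : ZMod n → PolyZW) (m : ZMod n) :
    qstar n hbar q G F m = ∑ j ∈ range n, ∑ k ∈ range n,
      ((Complex.I * hbar / 2) ^ j / qfact q j) • ((DzEnd q ^ j) (G (m - k - j)) *
        (sigmaDwEnd q ^ j) ((gammaEnd q ^ (m - k - j).val) (F k))) := by
  rw [qstar_apply_zmod]
  refine sum_congr rfl fun j _ => ?_
  rw [sum_range_eq_sum_zmod, ← (Equiv.subLeft (m - j)).sum_comp]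
  refine sum_congr rfl fun x _ => ?_
  simp only [Equiv.subLeft_apply, ZMod.natCast_val, ZMod.cast_id', id]
  rw [show m - (m - j - x) - j = x by ring, sub_right_comm m]

theorem qstar_single_right [NeZero n] (F : ZMod n → PolyZW) (l m : ZMod n) (g : PolyZW) :
    qstar n hbar q F (Pi.single l g) m = ∑ j ∈ range n,
      ((Complex.I * hbar / 2) ^ j / qfact q j) • ((DzEnd q ^ j) (F (m - l - j)) *
        (sigmaDwEnd q ^ j) ((gammaEnd q ^ (m - l - j).val) g)) := by
  rw [qstar_apply_zmod]
  refine sum_congr rfl fun j _ => ?_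
  rw [Fintype.sum_eq_single (m - l - j), show m - (m - l - j) - j = l by ring,
    Pi.single_eq_same]
  intro x hx
  have hne : m - x - j ≠ l := fun h => hx (by rw [← h]; ring)
  simp only [Pi.single_eq_of_ne hne, map_zero, mul_zero, smul_zero]

theorem qstar_single_left [NeZero n] {g : PolyZW} (hg : DzEnd q g = 0) (F : ZMod n → PolyZW)
    (l m : ZMod n) :
    qstar n hbar q (Pi.single l g) F m = g * (gammaEnd q ^ l.val) (F (m - l)) := by
  rw [qstar_apply_zmod, eventually_constant_sum (N := 1) _ NeZero.one_le, sum_range_one,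
    Fintype.sum_eq_single l]
  · simp [qfact_zero]
  · intro x hx
    simp only [Pi.single_eq_of_ne hx, map_zero, zero_mul, smul_zero]
  · intro j hj
    obtain ⟨j, rfl⟩ := Nat.exists_eq_add_of_le' hj
    refine sum_eq_zero fun x _ => ?_
    have hzero : DzEnd q (Pi.single (M := fun _ => PolyZW) l g x) = 0 := by
      rcases eq_or_ne x l with rfl | hx
      · rwa [Pi.single_eq_same]
      · rw [Pi.single_eq_of_ne hx, map_zero]
    rw [pow_succ (DzEnd q), Module.End.mul_apply, hzero, map_zero, zero_mul, smul_zero]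

theorem qstar_single_one_right [NeZero n] (F : ZMod n → PolyZW) (l m : ZMod n) :
    qstar n hbar q F (Pi.single l 1) m = F (m - l) := by
  rw [qstar_single_right, eventually_constant_sum (N := 1) _ NeZero.one_le, sum_range_one]
  · simp [qfact_zero, gammaEnd_pow_one]
  · intro j hj
    obtain ⟨j, rfl⟩ := Nat.exists_eq_add_of_le' hj
    rw [gammaEnd_pow_one, pow_succ (sigmaDwEnd q), Module.End.mul_apply, sigmaDwEnd_one, map_zero,
      mul_zero, smul_zero]

theorem qstar_single_w_right [NeZero n] (hn : 2 ≤ n) (hq : q ≠ 1) (F : ZMod n → PolyZW)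
    (m : ZMod n) :
    qstar n hbar q F (Pi.single 0 (C X)) m = q⁻¹ ^ m.val • (C X * F m) +
      q⁻¹ ^ (m - 1).val • (Complex.I * hbar / 2) • DzEnd q (F (m - 1)) := by
  rw [qstar_single_right, eventually_constant_sum (N := 2) _ hn, sum_range_succ, sum_range_one]
  · simp only [Nat.cast_zero, Nat.cast_one, sub_zero, pow_zero, pow_one, qfact_zero, qfact_one,
      div_one, one_smul, Module.End.one_apply, gammaEnd_pow_w, map_smul, sigmaDwEnd_w hq,
      mul_smul_comm, mul_one, mul_comm (F m)]
    rw [smul_comm (q⁻¹ ^ (m - 1).val), smul_mul_assoc]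
  · intro j hj
    obtain ⟨j, rfl⟩ := Nat.exists_eq_add_of_le' hj
    rw [gammaEnd_pow_w, pow_succ (sigmaDwEnd q), pow_succ (sigmaDwEnd q), Module.End.mul_apply,
      Module.End.mul_apply, map_smul, sigmaDwEnd_w hq, map_smul, sigmaDwEnd_one, smul_zero,
      map_zero, mul_zero, smul_zero]

end StarProduct

section Center

open Polynomial

variable {n : ℕ} {q t hbar : ℂ} {F : ZMod n → PolyZW}

/-- The recurrence `t D_z F(m) = [m+1]_q (1 - q⁻¹) w F(m+1)` between consecutive components of `F`.
With `t = iℏ/2` it expresses that `F` commutes with `w`. -/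
def IsStarRecurrent (q t : ℂ) (F : ZMod n → PolyZW) : Prop :=
  ∀ m : ℕ, t • DzEnd q (F m) = (qint q (m + 1) * (1 - q⁻¹)) • wEnd (F (m + 1 : ℕ))

theorem gammaEnd_apply_zero_of_qstar_single_one (hn : 2 ≤ n)
    (hF : qstar n hbar q F (Pi.single 1 1) = qstar n hbar q (Pi.single 1 1) F) :
    gammaEnd q (F 0) = F 0 := by
  have : NeZero n := ⟨by lia⟩
  have hone : DzEnd q 1 = 0 := DzEnd_C q 1
  have h := congr_fun hF 1
  rw [qstar_single_one_right, qstar_single_left hone, ZMod.val_one'' (by lia), pow_one, one_mul,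
    sub_self] at h
  exact h.symm

theorem isStarRecurrent_of_qstar_single_w (hn : 2 ≤ n) (hq : IsPrimitiveRoot q n)
    (hF : qstar n hbar q F (Pi.single 0 (C X)) = qstar n hbar q (Pi.single 0 (C X)) F) :
    IsStarRecurrent q (Complex.I * hbar / 2) F := fun m => by
  have : NeZero n := ⟨by lia⟩
  have hq0 : q ≠ 0 := hq.ne_zero (by lia)
  have hinv : q⁻¹ ^ n = 1 := by rw [inv_pow, hq.pow_eq_one, inv_one]
  have h := congr_fun hF (m + 1 : ℕ)
  rw [qstar_single_w_right hn (hq.ne_one hn), qstar_single_left (DzEnd_C q X), ZMod.val_zero,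
    pow_zero, Module.End.one_apply, sub_zero, ZMod.val_natCast, ← pow_eq_pow_mod _ hinv,
    show ((m + 1 : ℕ) : ZMod n) - 1 = (m : ℕ) by push_cast; ring, ZMod.val_natCast,
    ← pow_eq_pow_mod _ hinv, ← wEnd_apply, ← eq_sub_iff_add_eq'] at h
  rw [qint_succ_mul_one_sub_inv hq0, mul_smul, sub_smul, one_smul, ← h, smul_smul, ← mul_pow,
    mul_inv_cancel₀ hq0, one_pow, one_smul]

theorem IsStarRecurrent.smul_wEnd_pow_eq (hF : IsStarRecurrent q t F) (j : ℕ) :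
    (qfact q j * (1 - q⁻¹) ^ j) • (wEnd ^ j) (F j) = t ^ j • (DzEnd q ^ j) (F 0) := by
  have hcomm : SemiconjBy (DzEnd q) wEnd ((1 : ℂ) • wEnd) := by
    rw [one_smul]
    exact commute_DzEnd_wEnd q
  have h := qfact_mul_pow_smul_pow_apply (u := fun m => F m) hcomm hF j 0
  simpa only [qfact_zero, one_mul, one_pow, add_zero, Nat.cast_zero] using h.symm

theorem smul_DzEnd_eq_of_smul_wEnd_pow_eq (hq : IsPrimitiveRoot q n) (hn : 1 < n) {m : ℕ}
    (hm : m < n) (hF : (qfact q m * (1 - q⁻¹) ^ m) • (wEnd ^ m) (F m) = t ^ m • (DzEnd q ^ m) (F 0))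
    (hF' : (qfact q (m + 1) * (1 - q⁻¹) ^ (m + 1)) • (wEnd ^ (m + 1)) (F (m + 1 : ℕ)) =
      t ^ (m + 1) • (DzEnd q ^ (m + 1)) (F 0)) :
    t • DzEnd q (F m) = (qint q (m + 1) * (1 - q⁻¹)) • wEnd (F (m + 1 : ℕ)) := by
  have hc : qfact q m * (1 - q⁻¹) ^ m ≠ 0 := mul_ne_zero (qfact_ne_zero hq hm)
    (pow_ne_zero _ (sub_ne_zero.mpr (inv_ne_one.mpr (hq.ne_one hn)).symm))
  have hw : Function.Injective (wEnd ^ m) := by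
    rw [Module.End.coe_pow]
    exact wEnd_injective.iterate m
  have hcomm : (wEnd ^ m) (DzEnd q (F m)) = DzEnd q ((wEnd ^ m) (F m)) :=
    (LinearMap.congr_fun ((commute_DzEnd_wEnd q).pow_right m).eq (F m)).symm
  apply hw
  apply smul_right_injective PolyZW hc
  calc (qfact q m * (1 - q⁻¹) ^ m) • (wEnd ^ m) (t • DzEnd q (F m))
    _ = t • DzEnd q ((qfact q m * (1 - q⁻¹) ^ m) • (wEnd ^ m) (F m)) := by
      rw [map_smul, map_smul, hcomm, smul_comm]
    _ = t ^ (m + 1) • (DzEnd q ^ (m + 1)) (F 0) := by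
      rw [hF, map_smul, smul_smul, ← pow_succ', pow_succ' (DzEnd q), Module.End.mul_apply]
    _ = (qfact q m * (1 - q⁻¹) ^ m) •
          (wEnd ^ m) ((qint q (m + 1) * (1 - q⁻¹)) • wEnd (F (m + 1 : ℕ))) := by
      rw [← hF', map_smul, smul_smul, pow_succ wEnd, Module.End.mul_apply, qfact_succ]
      congr 1
      ring

theorem isStarRecurrent_iff (hq : IsPrimitiveRoot q n) (hn : 1 < n) :
    IsStarRecurrent q t F ↔ ∀ j : ℕ, 1 ≤ j → j ≤ n - 1 →
      (qfact q j * (1 - q⁻¹) ^ j) • (wEnd ^ j) (F j) = t ^ j • (DzEnd q ^ j) (F 0) := by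
  refine ⟨fun hF j _ _ => hF.smul_wEnd_pow_eq j, fun hF m => ?_⟩
  have hclosed {j : ℕ} (hj : j ≤ n) :
      (qfact q j * (1 - q⁻¹) ^ j) • (wEnd ^ j) (F j) = t ^ j • (DzEnd q ^ j) (F 0) := by
    rcases j.eq_zero_or_pos with rfl | hpos
    · simp [qfact_zero]
    rcases hj.eq_or_lt with rfl | hlt
    · rw [qfact_eq_zero hq hn le_rfl, DzEnd_pow_eq_zero (by lia) hq.pow_eq_one, zero_mul,
        zero_smul, LinearMap.zero_apply, smul_zero]
    · exact hF j hpos (by lia)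
  have hlt : m % n < n := Nat.mod_lt m (by lia)
  have h := smul_DzEnd_eq_of_smul_wEnd_pow_eq hq hn hlt (hclosed hlt.le) (hclosed hlt)
  rwa [qint_mod_add_one hq.pow_eq_one (hq.ne_one hn), Nat.cast_succ, ZMod.natCast_mod,
    ← Nat.cast_succ] at h

theorem IsStarRecurrent.gammaEnd_apply (hF : IsStarRecurrent q t F) (hq : IsPrimitiveRoot q n)
    (hn : 1 < n) (h0 : gammaEnd q (F 0) = F 0) (x : ZMod n) : gammaEnd q (F x) = F x := by
  have : NeZero n := ⟨by lia⟩
  have hq0 : q ≠ 0 := hq.ne_zero (by lia)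
  have hDz (f : PolyZW) : gammaEnd q (DzEnd q f) = q⁻¹ • DzEnd q (gammaEnd q f) :=
    LinearMap.congr_fun (semiconjBy_gammaEnd_DzEnd hq0).eq f
  have hw (f : PolyZW) : gammaEnd q (wEnd f) = q⁻¹ • wEnd (gammaEnd q f) :=
    LinearMap.congr_fun (semiconjBy_gammaEnd_wEnd q).eq f
  suffices h : ∀ m : ℕ, m < n → gammaEnd q (F m) = F m by
    simpa only [ZMod.natCast_val, ZMod.cast_id', id] using h x.val x.val_lt
  intro m hm
  induction m with
  | zero => simpa only [Nat.cast_zero] using h0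
  | succ m ih =>
    have hc : q⁻¹ * (qint q (m + 1) * (1 - q⁻¹)) ≠ 0 := mul_ne_zero (inv_ne_zero hq0) <|
      mul_ne_zero (qint_succ_ne_zero hq hm) (sub_ne_zero.mpr (inv_ne_one.mpr (hq.ne_one hn)).symm)
    apply wEnd_injective
    apply smul_right_injective PolyZW hc
    have h := congr_arg (gammaEnd q) (hF m)
    simp only [map_smul, hDz, hw, ih (by lia)] at h
    rw [smul_comm t, hF m, smul_smul, smul_comm, smul_smul] at h
    exact h.symm

theorem IsStarRecurrent.smul_sigmaDwEnd (hF : IsStarRecurrent q t F) (hq : q ≠ 1)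
    (hγ : ∀ x, gammaEnd q (F x) = F x) (m : ℕ) :
    t • sigmaDwEnd q (F m) = (qint q (m + 1) * (q - 1)) • zEnd (F (m + 1 : ℕ)) := by
  have hswap : (1 - q⁻¹) • wEnd (sigmaDwEnd q (F m)) = (q - 1) • zEnd (DzEnd q (F m)) := by
    have hw := LinearMap.congr_fun (one_sub_inv_smul_wEnd_mul_sigmaDwEnd hq) (F m)
    have hz := LinearMap.congr_fun (sub_one_smul_zEnd_mul_DzEnd hq) (F m)
    rw [LinearMap.sub_apply, hγ] at hw
    exact hw.trans hz.symm
  apply wEnd_injective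
  apply smul_right_injective PolyZW (sub_ne_zero.mpr (inv_ne_one.mpr hq).symm : 1 - q⁻¹ ≠ 0)
  calc (1 - q⁻¹) • wEnd (t • sigmaDwEnd q (F m))
    _ = (q - 1) • zEnd (t • DzEnd q (F m)) := by
      rw [map_smul, map_smul, smul_comm, hswap, smul_comm]
    _ = (1 - q⁻¹) • wEnd ((qint q (m + 1) * (q - 1)) • zEnd (F (m + 1 : ℕ))) := by
      simp only [hF m, map_smul, smul_smul, zEnd_apply, wEnd_apply, mul_left_comm X]
      congr 1
      ring

theorem IsStarRecurrent.qstar_left_eq_sum (hF : IsStarRecurrent q (Complex.I * hbar / 2) F)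
    (hq : IsPrimitiveRoot q n) (hn : 1 < n) (G : ZMod n → PolyZW) (m : ZMod n) :
    qstar n hbar q F G m = ∑ N ∈ range n, F N * (sigmaEnd q ^ N) (G (m - N)) := by
  have hsum := sum_pow_div_qfact_smul_pow_apply_mul (r := 1) (u := fun k => F k) hq hn
    (by rw [one_smul]; exact commute_DzEnd_wEnd q) hF
    (one_sub_inv_smul_wEnd_mul_sigmaDwEnd (hq.ne_one hn))
    (by rw [one_smul]; exact commute_sigmaEnd_wEnd q)
    (by rw [one_smul]; exact semiconjBy_gammaEnd_smul_wEnd (hq.ne_zero (by lia)))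
    (commute_sigmaEnd_gammaEnd q) fun N => G (m - N)
  rw [qstar_apply, ← hsum]
  simp only [Nat.cast_add, sub_sub, add_comm]

theorem IsStarRecurrent.qstar_right_eq_sum (hF : IsStarRecurrent q (Complex.I * hbar / 2) F)
    (hq : IsPrimitiveRoot q n) (hn : 1 < n) (hγ : ∀ x, gammaEnd q (F x) = F x)
    (G : ZMod n → PolyZW) (m : ZMod n) :
    qstar n hbar q G F m = ∑ N ∈ range n, F N * (sigmaEnd q ^ N) (G (m - N)) := by
  have : NeZero n := ⟨by lia⟩
  have hsum := sum_pow_div_qfact_smul_pow_apply_mul (y := 1) (u := fun k => F k) hq hn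
    (semiconjBy_sigmaDwEnd_zEnd q) (hF.smul_sigmaDwEnd (hq.ne_one hn) hγ)
    (sub_one_smul_zEnd_mul_DzEnd (hq.ne_one hn)) (semiconjBy_sigmaEnd_zEnd q)
    (SemiconjBy.one_left _) (Commute.one_right _) fun N => G (m - N)
  have hγpow (k : ℕ) (x : ZMod n) : (gammaEnd q ^ k) (F x) = F x := by
    rw [Module.End.pow_apply, Function.iterate_fixed (hγ x)]
  rw [qstar_apply_flip, ← hsum]
  simp only [hγpow, one_pow, Module.End.one_apply, Nat.cast_add, sub_sub, add_comm, mul_comm]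

theorem qstar_comm_iff (hq : IsPrimitiveRoot q n) (hn : 2 ≤ n) :
    (∀ G, qstar n hbar q F G = qstar n hbar q G F) ↔
      gammaEnd q (F 0) = F 0 ∧ IsStarRecurrent q (Complex.I * hbar / 2) F := by
  refine ⟨fun hF => ⟨gammaEnd_apply_zero_of_qstar_single_one hn (hF _),
    isStarRecurrent_of_qstar_single_w hn hq (hF _)⟩, fun ⟨h0, hF⟩ G => funext fun m => ?_⟩
  rw [hF.qstar_left_eq_sum hq hn, hF.qstar_right_eq_sum hq hn (hF.gammaEnd_apply hq hn h0)]

end Center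

end QStar

theorem qstar_central_iff_general {n : ℕ} (hn : 2 ≤ n) {q : ℂ} (hq : IsPrimitiveRoot q n)
    (hbar : ℂ) (F : ZMod n → PolyZW) :
    (∀ G : ZMod n → PolyZW, qstar n hbar q F G = qstar n hbar q G F) ↔
      (gammaOp q (F 0) = F 0 ∧
        ∀ j : ℕ, 1 ≤ j → j ≤ n - 1 →
          (qfact q j * (1 - q⁻¹) ^ j) •
              (Polynomial.C ((Polynomial.X : Polynomial ℂ) ^ j) * F (j : ZMod n)) =
            ((Complex.I * hbar / 2) ^ j) • (Dz q)^[j] (F 0)) := by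
  rw [QStar.qstar_comm_iff hq hn, QStar.isStarRecurrent_iff hq hn]
  simp only [QStar.wEnd_pow_apply, ← Polynomial.C_pow]
  simp only [Module.End.pow_apply]
  rfl

/-- For `n ≥ 2`, `q = exp(2πi/n)` and `ℏ ∈ ℂ`, an element `F` of the crossed product is central
(`F ⋆ G = G ⋆ F` for all `G`) if and only if `γ(F(0)) = F(0)` and, for every `1 ≤ j ≤ n-1`,
`[j]_q! (1-q⁻¹)^j w^j F(j) = (iℏ/2)^j D_z^j(F(0))`. In particular a central element is
completely determined by its `γ`-invariant component `F(0)`. -/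
theorem qstar_central_iff (n : ℕ) (hn : 2 ≤ n) (q : ℂ)
    (hq : q = Complex.exp (2 * Real.pi * Complex.I / n)) (hbar : ℂ)
    (F : ZMod n → PolyZW) :
    (∀ G : ZMod n → PolyZW, qstar n hbar q F G = qstar n hbar q G F) ↔
      (gammaOp q (F 0) = F 0 ∧
        ∀ j : ℕ, 1 ≤ j → j ≤ n - 1 →
          (qfact q j * (1 - q⁻¹) ^ j) •
              (Polynomial.C ((Polynomial.X : Polynomial ℂ) ^ j) * F (j : ZMod n)) =
            ((Complex.I * hbar / 2) ^ j) • (Dz q)^[j] (F 0)) :=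
  qstar_central_iff_general hn (hq ▸ Complex.isPrimitiveRoot_exp n (by lia)) hbar F
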